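/- Let F(u,v) be a positive harmonic function on a neighborhood of the horizontal strip {(u,v) : 0 ≤ v ≤ C}, C > 0, satisfying F(u+2πb,v)=F(u,v). Then F(u,v) = Σ_{k≠0}(a_k e^{kv/b} cos(ku/b) + b_k e^{kv/b} sin(ku/b)) + a_0(1 − v/C) + b_0 v for some real a_k, b_k with a_0 ≥ 0 and b_0 ≥ 0. -/

import Mathlib

open Real

lemma aux_fourier (b : ℕ) (hb : 0 < b) (f : ℝ → ℂ) (hf : Continuous f)
    (hp : ∀ x, f (x + 2 * π * b) = f x) (c : ℤ → ℂ)
    (hc : ∀ n : ℤ, c n = (1 / (2 * π * b) : ℝ) *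
      ∫ x in (0:ℝ)..(2 * π * b), Complex.exp (-(Complex.I * n * x / b)) * f x)
    (hs : Summable c) (x : ℝ) :
    HasSum (fun n : ℤ => c n * Complex.exp (Complex.I * n * x / b)) (f x) := by
  have hbR : (0:ℝ) < b := by exact_mod_cast hb
  have hbC : (b:ℂ) ≠ 0 := by exact_mod_cast hb.ne'
  have hpiC : (π:ℂ) ≠ 0 := by exact_mod_cast Real.pi_ne_zero
  have : Fact (0 < 2 * π * b) := ⟨by positivity⟩
  have hp' : Function.Periodic f (2 * π * b) := hp
  let g : C(AddCircle (2 * π * b), ℂ) :=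
    ⟨hp'.lift, continuous_coinduced_dom.mpr (by exact hf)⟩
  have hcoef : ∀ n, fourierCoeff g n = c n := by
    intro n
    rw [fourierCoeff_eq_intervalIntegral _ n 0, hc, zero_add, Complex.real_smul]
    congr 1
    refine intervalIntegral.integral_congr (fun y _ => ?_)
    simp only [smul_eq_mul, fourier_coe_apply]
    congr 1
    congr 1
    push_cast
    field_simp
  have hs' : Summable (fourierCoeff g) := by
    rw [show fourierCoeff g = c from funext hcoef]; exact hs
  have := has_pointwise_sum_fourier_series_of_summable hs' (x : AddCircle (2 * π * b))
  convert this using 2 with n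
  · rw [hcoef, fourier_coe_apply, smul_eq_mul]
    congr 2
    push_cast
    field_simp
  · rfl

lemma aux_e (b : ℕ) (n : ℤ) (x : ℝ) :
    HasDerivAt (fun x : ℝ => Complex.exp (-(Complex.I * n * x / b)))
      (-(Complex.I * n / b) * Complex.exp (-(Complex.I * n * x / b))) x := by
  have h1 : HasDerivAt (fun x : ℝ => (x:ℂ)) 1 x := Complex.ofRealCLM.hasDerivAt
  have h2 : HasDerivAt (fun x : ℝ => -(Complex.I * n * x / b)) (-(Complex.I * n * 1 / b)) x :=
    ((h1.const_mul (Complex.I * n)).div_const (b:ℂ)).neg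
  convert h2.cexp using 1
  ring

lemma aux_e_per (b : ℕ) (hb : 0 < b) (n : ℤ) :
    Complex.exp (-(Complex.I * n * ((2 * π * b : ℝ) : ℂ) / b)) = 1 := by
  have hbC : (b:ℂ) ≠ 0 := by exact_mod_cast hb.ne'
  rw [Complex.exp_eq_one_iff]
  refine ⟨-n, ?_⟩
  push_cast
  field_simp

lemma aux_ibp (b : ℕ) (hb : 0 < b) (n : ℤ) (f f1 f2 : ℝ → ℂ)
    (h1 : ∀ x, HasDerivAt f (f1 x) x) (h2 : ∀ x, HasDerivAt f1 (f2 x) x)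
    (hc : Continuous f2) (hp : ∀ x, f (x + 2 * π * b) = f x) :
    ∫ x in (0:ℝ)..(2 * π * b), Complex.exp (-(Complex.I * n * x / b)) * f2 x
      = - ((n:ℂ) / b) ^ 2 *
      ∫ x in (0:ℝ)..(2 * π * b), Complex.exp (-(Complex.I * n * x / b)) * f x := by
  have hp1 : f1 (2 * π * b) = f1 0 := by
    have := (h1 (0 + 2 * π * b)).comp_add_const 0 (2 * π * b)
    rw [show (fun x => f (x + 2 * π * b)) = f from funext hp] at this
    simpa using this.unique (h1 0)
  have hp0 : f (2 * π * b) = f 0 := by simpa using hp 0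
  have hcf : Continuous f := continuous_iff_continuousAt.2 fun x => (h1 x).continuousAt
  have hce : Continuous (fun x : ℝ => Complex.exp (-(Complex.I * n * x / b))) := by fun_prop
  have key : ∫ x in (0:ℝ)..(2 * π * b), (Complex.exp (-(Complex.I * n * x / b)) * f2 x
      + ((n:ℂ) / b) ^ 2 * (Complex.exp (-(Complex.I * n * x / b)) * f x)) = 0 := by
    rw [intervalIntegral.integral_eq_sub_of_hasDerivAt
      (f := fun x => Complex.exp (-(Complex.I * n * x / b)) * f1 x
        + (Complex.I * n / b) * Complex.exp (-(Complex.I * n * x / b)) * f x)]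
    · rw [aux_e_per b hb n, hp1, hp0]; simp
    · intro x _
      refine HasDerivAt.congr_deriv (((aux_e b n x).mul (h2 x)).add
        (((aux_e b n x).const_mul (Complex.I * n / (b:ℂ))).mul (h1 x))) ?_
      linear_combination (-((n:ℂ) / b) ^ 2 * (Complex.exp (-(Complex.I * n * x / b)) * f x))
        * Complex.I_sq
    · apply Continuous.intervalIntegrable; fun_prop
  rw [intervalIntegral.integral_add, intervalIntegral.integral_const_mul] at key
  · linear_combination key
  · apply Continuous.intervalIntegrable; fun_prop
  · apply Continuous.intervalIntegrable; fun_prop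

lemma aux_diff (C T : ℝ) (hT : 0 ≤ T) (H H' : ℝ → ℝ → ℂ)
    (hc : ContinuousOn (fun p : ℝ × ℝ => H p.1 p.2) {p | 0 ≤ p.2 ∧ p.2 ≤ C})
    (hc' : ContinuousOn (fun p : ℝ × ℝ => H' p.1 p.2) {p | 0 ≤ p.2 ∧ p.2 ≤ C})
    (hd : ∀ u, ∀ v ∈ Set.Ioo 0 C, HasDerivAt (fun v => H u v) (H' u v) v)
    (v : ℝ) (hv : v ∈ Set.Ioo 0 C) :
    HasDerivAt (fun v => ∫ u in (0:ℝ)..T, H u v) (∫ u in (0:ℝ)..T, H' u v) v := by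
  have sl : ∀ (K : ℝ → ℝ → ℂ), 
      ContinuousOn (fun p : ℝ × ℝ => K p.1 p.2) {p | 0 ≤ p.2 ∧ p.2 ≤ C} →
      ∀ w ∈ Set.Ioo 0 C, Continuous (fun u => K u w) := by
    intro K hK w hw
    exact hK.comp_continuous (f := fun u : ℝ => (u, w)) (by fun_prop)
      (fun u => ⟨hw.1.le, hw.2.le⟩)
  obtain ⟨M, hM⟩ := (isCompact_Icc.prod isCompact_Icc :
    IsCompact (Set.Icc 0 T ×ˢ Set.Icc 0 C)).exists_bound_of_continuousOn
      (hc'.mono (fun p hp => ⟨hp.2.1, hp.2.2⟩))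
  have hn : Set.Ioo 0 C ∈ nhds v := Ioo_mem_nhds hv.1 hv.2
  refine (intervalIntegral.hasDerivAt_integral_of_dominated_loc_of_deriv_le
    (F := fun v u => H u v) (F' := fun v u => H' u v) (bound := fun _ => M) hn ?_ ?_ ?_ ?_ ?_ ?_).2
  · filter_upwards [hn] with w hw
    exact (sl H hc w hw).aestronglyMeasurable
  · exact (sl H hc v hv).intervalIntegrable _ _
  · exact (sl H' hc' v hv).aestronglyMeasurable
  · refine Filter.Eventually.of_forall (fun t ht w hw => ?_)
    rw [Set.uIoc_of_le hT] at ht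
    exact hM (t, w) ⟨⟨ht.1.le, ht.2⟩, ⟨hw.1.le, hw.2.le⟩⟩
  · exact intervalIntegrable_const
  · exact Filter.Eventually.of_forall (fun t _ w hw => hd t w hw)

lemma aux_cont (C T : ℝ) (hC : 0 < C) (H : ℝ → ℝ → ℂ)
    (hc : ContinuousOn (fun p : ℝ × ℝ => H p.1 p.2) {p | 0 ≤ p.2 ∧ p.2 ≤ C}) :
    ContinuousOn (fun v => ∫ u in (0:ℝ)..T, H u v) (Set.Icc 0 C) := by
  have h1 : Continuous (fun v => ∫ u in (0:ℝ)..T, H u (max 0 (min v C))) := by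
    refine intervalIntegral.continuous_parametric_intervalIntegral_of_continuous'
      (f := fun v u => H u (max 0 (min v C))) ?_ _ _
    exact hc.comp_continuous (f := fun q : ℝ × ℝ => (q.2, max 0 (min q.1 C))) (by fun_prop)
      (fun q => ⟨le_max_left _ _, max_le hC.le (min_le_right _ _)⟩)
  refine h1.continuousOn.congr (fun v hv => ?_)
  simp only [min_eq_left hv.2, max_eq_right hv.1]

lemma aux_const (C : ℝ) (h : ℝ → ℂ) (hd : ∀ v ∈ Set.Ioo 0 C, HasDerivAt h 0 v) :
    ∃ a, ∀ v ∈ Set.Ioo 0 C, h v = a :=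
  isOpen_Ioo.exists_is_const_of_deriv_eq_zero isPreconnected_Ioo
    (fun v hv => (hd v hv).differentiableAt.differentiableWithinAt)
    (fun v hv => (hd v hv).deriv)

lemma aux_ext (C : ℝ) (hC : 0 < C) (G K : ℝ → ℂ) (hG : ContinuousOn G (Set.Icc 0 C))
    (hK : Continuous K) (h : ∀ v ∈ Set.Ioo 0 C, G v = K v) : ∀ v ∈ Set.Icc 0 C, G v = K v := by
  have : Set.EqOn G K (Set.Icc 0 C) := Set.EqOn.of_subset_closure (s := Set.Ioo 0 C) h hG
    hK.continuousOn Set.Ioo_subset_Icc_self (by rw [closure_Ioo hC.ne])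
  exact this

lemma aux_ode0 (C : ℝ) (hC : 0 < C) (G G1 : ℝ → ℂ) (hG : ContinuousOn G (Set.Icc 0 C))
    (h1 : ∀ v ∈ Set.Ioo 0 C, HasDerivAt G (G1 v) v)
    (h2 : ∀ v ∈ Set.Ioo 0 C, HasDerivAt G1 0 v) :
    ∃ p q : ℂ, ∀ v ∈ Set.Icc 0 C, G v = p + q * v := by
  obtain ⟨q, hq⟩ := aux_const C G1 h2
  have hr : ∀ x : ℝ, HasDerivAt (fun x : ℝ => (x:ℂ)) 1 x := fun x => Complex.ofRealCLM.hasDerivAt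
  obtain ⟨p, hp⟩ := aux_const C (fun v => G v - q * v) (fun v hv => by
    refine ((h1 v hv).sub ((hr v).const_mul q)).congr_deriv ?_
    rw [hq v hv]; ring)
  refine ⟨p, q, aux_ext C hC _ _ hG (by fun_prop) (fun v hv => ?_)⟩
  rw [← hp v hv]; ring

lemma aux_ode (C : ℝ) (hC : 0 < C) (l : ℝ) (hl : l ≠ 0) (G G1 : ℝ → ℂ)
    (hG : ContinuousOn G (Set.Icc 0 C))
    (h1 : ∀ v ∈ Set.Ioo 0 C, HasDerivAt G (G1 v) v)
    (h2 : ∀ v ∈ Set.Ioo 0 C, HasDerivAt G1 ((l:ℂ) ^ 2 * G v) v) :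
    ∃ p q : ℂ, ∀ v ∈ Set.Icc 0 C, G v = p * Real.exp (l * v) + q * Real.exp (-(l * v)) := by
  have he : ∀ (m v : ℝ), HasDerivAt (fun v : ℝ => ((Real.exp (m * v) : ℝ) : ℂ))
      ((m:ℂ) * (Real.exp (m * v) : ℝ)) v := by
    intro m v
    have : HasDerivAt (fun v : ℝ => Real.exp (m * v)) (Real.exp (m * v) * (m * 1)) v :=
      ((hasDerivAt_id v).const_mul m).exp
    convert this.ofReal_comp using 1
    push_cast; ring
  obtain ⟨c, hc⟩ := aux_const C (fun v => (G1 v + l * G v) * (Real.exp (-l * v) : ℝ))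
    (fun v hv => by
      refine (((h2 v hv).add ((h1 v hv).const_mul (l:ℂ))).mul (he (-l) v)).congr_deriv ?_
      simp only [Pi.add_apply, Complex.ofReal_neg]; ring)
  obtain ⟨d, hd⟩ := aux_const C (fun v => (G1 v - l * G v) * (Real.exp (l * v) : ℝ))
    (fun v hv => by
      refine (((h2 v hv).sub ((h1 v hv).const_mul (l:ℂ))).mul (he l v)).congr_deriv ?_
      simp only [Pi.sub_apply]; ring)
  have hlC : (l:ℂ) ≠ 0 := by exact_mod_cast hl
  refine ⟨c / (2 * l), -d / (2 * l), aux_ext C hC _ _ hG (by fun_prop) (fun v hv => ?_)⟩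
  have hm : ((Real.exp (-l * v) : ℝ) : ℂ) * (Real.exp (l * v) : ℝ) = 1 := by
    rw [← Complex.ofReal_mul, ← Real.exp_add]; simp
  have e1 := hc v hv
  have e2 := hd v hv
  rw [neg_mul] at hm e1
  rw [← e1, ← e2]
  field_simp
  linear_combination (-2 * l * G v) * hm

lemma aux_bound (L L0 t : ℝ) (hL0 : 0 < L0) (hL : L0 ≤ L) (ht : 0 ≤ t) (htL : t ≤ L)
    (p q g0 g1 : ℂ) (h0 : g0 = p + q) (h1 : g1 = p * Real.exp L + q * Real.exp (-L)) :
    ‖p * (Real.exp t : ℝ)‖ ≤ (‖g0‖ + ‖g1‖) / (1 - Real.exp (-(2 * L0))) ∧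
    ‖q * (Real.exp (-t) : ℝ)‖ ≤ (‖g0‖ + ‖g1‖) / (1 - Real.exp (-(2 * L0))) := by
  have hx : Real.exp (-(2 * L)) ≤ Real.exp (-(2 * L0)) := Real.exp_le_exp.2 (by linarith)
  have hx0 : Real.exp (-(2 * L0)) < 1 := by rw [Real.exp_lt_one_iff]; linarith
  have hy : Real.exp (-L) ≤ 1 := by rw [Real.exp_le_one_iff]; linarith
  have hm : ((Real.exp (-L) : ℝ) : ℂ) * (Real.exp L : ℝ) = 1 := by
    rw [← Complex.ofReal_mul, ← Real.exp_add]; simp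
  have hs : ((Real.exp (-(2 * L)) : ℝ) : ℂ) = (Real.exp (-L) : ℝ) * (Real.exp (-L) : ℝ) := by
    rw [← Complex.ofReal_mul, ← Real.exp_add]; congr 2; ring
  have hnn : ‖((1 - Real.exp (-(2 * L)) : ℝ) : ℂ)‖ = 1 - Real.exp (-(2 * L)) := by
    rw [Complex.norm_real, Real.norm_of_nonneg]; linarith
  have hne : ∀ r : ℝ, ‖((Real.exp r : ℝ) : ℂ)‖ = Real.exp r := fun r => by
    rw [Complex.norm_real, Real.norm_of_nonneg (Real.exp_pos r).le]
  have key : ∀ z x y : ℂ, z * ((1 - Real.exp (-(2 * L)) : ℝ) : ℂ) = x - y * (Real.exp (-L) : ℝ) →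
      ‖z‖ ≤ (‖x‖ + ‖y‖) / (1 - Real.exp (-(2 * L0))) := by
    intro z x y h
    rw [le_div_iff₀ (by linarith)]
    have h2 : ‖z‖ * (1 - Real.exp (-(2 * L))) ≤ ‖x‖ + ‖y‖ := by
      rw [← hnn, ← norm_mul, h]
      refine (norm_sub_le _ _).trans ?_
      rw [norm_mul, hne]
      nlinarith [norm_nonneg y]
    nlinarith [norm_nonneg z]
  constructor
  · have h := key (p * (Real.exp L : ℝ)) g1 g0 (by
      rw [h0, h1]; push_cast at hs hm ⊢; rw [hs]
      linear_combination (-p * Complex.exp (-L)) * hm)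
    rw [add_comm] at h
    refine le_trans ?_ h
    rw [norm_mul, norm_mul, hne, hne]
    exact mul_le_mul_of_nonneg_left (Real.exp_le_exp.2 htL) (norm_nonneg _)
  · have h := key q g0 g1 (by
      rw [h0, h1]; push_cast at hs hm ⊢; rw [hs]
      linear_combination p * hm)
    refine le_trans ?_ h
    rw [norm_mul, hne]
    have : Real.exp (-t) ≤ 1 := by rw [Real.exp_le_one_iff]; linarith
    nlinarith [norm_nonneg q]

lemma aux_sum (b : ℕ) (hb : 0 < b) (f f1 f2 : ℝ → ℂ)
    (h1 : ∀ x, HasDerivAt f (f1 x) x) (h2 : ∀ x, HasDerivAt f1 (f2 x) x)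
    (hc : Continuous f2) (hp : ∀ x, f (x + 2 * π * b) = f x) :
    Summable (fun n : ℤ =>
      ∫ x in (0:ℝ)..(2 * π * b), Complex.exp (-(Complex.I * n * x / b)) * f x) := by
  have hbR : (0:ℝ) < b := by exact_mod_cast hb
  set M := ∫ x in (0:ℝ)..(2 * π * b), ‖f2 x‖ with hM
  have hs : Summable (fun n : ℤ => (M * b ^ 2) * (1 / (n:ℝ) ^ 2)) :=
    (Real.summable_one_div_int_pow.2 (by norm_num)).mul_left _
  refine Summable.of_norm_bounded_eventually hs ?_
  filter_upwards [(Set.finite_singleton (0:ℤ)).compl_mem_cofinite] with n hn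
  have hn0 : (n:ℝ) ≠ 0 := by exact_mod_cast hn
  have hn2 : 0 < (n:ℝ) ^ 2 := by positivity
  have key := congrArg norm (aux_ibp b hb n f f1 f2 h1 h2 hc hp)
  have hle : ‖∫ x in (0:ℝ)..(2 * π * b), Complex.exp (-(Complex.I * n * x / b)) * f2 x‖ ≤ M := by
    refine (intervalIntegral.norm_integral_le_integral_norm (by positivity)).trans (le_of_eq ?_)
    refine intervalIntegral.integral_congr (fun x _ => ?_)
    have : ‖Complex.exp (-(Complex.I * n * x / b))‖ = 1 := by
      rw [show -(Complex.I * n * x / b) = ((-(n * x / b) : ℝ) : ℂ) * Complex.I by push_cast; ring]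
      exact Complex.norm_exp_ofReal_mul_I _
    simp only [norm_mul, this, one_mul]
  rw [key, norm_mul, norm_neg, norm_pow, norm_div, Complex.norm_intCast, Complex.norm_natCast,
    div_pow, sq_abs] at hle
  rw [mul_one_div, le_div_iff₀ hn2]
  rw [div_mul_eq_mul_div, div_le_iff₀ (by positivity)] at hle
  linarith

lemma aux_final (b : ℕ) (hb : 0 < b) (C : ℝ) (hC : 0 < C) (c : ℤ → ℝ → ℂ)
    (hode : ∀ n : ℤ, n ≠ 0 → ∃ p q : ℂ, ∀ v ∈ Set.Icc 0 C,
      c n v = p * Real.exp ((n / b : ℝ) * v) + q * Real.exp (-((n / b : ℝ) * v)))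
    (hs0 : Summable (fun n => c n 0)) (hsC : Summable (fun n => c n C)) :
    ∃ A B : ℤ → ℝ, ∀ u v S : ℝ, v ∈ Set.Icc 0 C →
      HasSum (fun n : ℤ => c n v * Complex.exp (Complex.I * n * u / b)) (S : ℂ) →
      HasSum (fun k : {k : ℤ // k ≠ 0} =>
          (A k.1 * Real.exp ((k.1 : ℝ) * v / b) * Real.cos ((k.1 : ℝ) * u / b)
            + B k.1 * Real.exp ((k.1 : ℝ) * v / b) * Real.sin ((k.1 : ℝ) * u / b)))
        (S - (c 0 v).re) := by
  have hbR : (0:ℝ) < b := by exact_mod_cast hb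
  have : ∀ n : ℤ, ∃ p q : ℂ, (n = 0 → p = 0 ∧ q = 0) ∧ (n ≠ 0 → ∀ v ∈ Set.Icc 0 C,
      c n v = p * Real.exp ((n / b : ℝ) * v) + q * Real.exp (-((n / b : ℝ) * v))) := by
    intro n
    by_cases hn : n = 0
    · exact ⟨0, 0, fun _ => ⟨rfl, rfl⟩, fun h => absurd hn h⟩
    · obtain ⟨p, q, h⟩ := hode n hn
      exact ⟨p, q, fun h => absurd h hn, fun _ => h⟩
  choose p q hz hpq using this
  have hp0 : p 0 = 0 := (hz 0 rfl).1
  have hq0 : q 0 = 0 := (hz 0 rfl).2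
  have hL0 : 0 < C / b := by positivity
  have hone : ∀ n : ℤ, 0 < n → (1:ℝ) ≤ n := fun n h => by exact_mod_cast h
  -- bounds
  have hbd : ∀ n : ℤ, ∀ v ∈ Set.Icc 0 C,
      ‖p n * (Real.exp ((n / b : ℝ) * v) : ℝ)‖
        ≤ (‖c n 0‖ + ‖c n C‖) / (1 - Real.exp (-(2 * (C / b)))) ∧
      ‖q n * (Real.exp (-((n / b : ℝ) * v)) : ℝ)‖
        ≤ (‖c n 0‖ + ‖c n C‖) / (1 - Real.exp (-(2 * (C / b)))) := by
    intro n v hv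
    have hx0 : Real.exp (-(2 * (C / b))) < 1 := by rw [Real.exp_lt_one_iff]; linarith
    rcases lt_trichotomy n 0 with hn | hn | hn
    · have h1 : (1:ℝ) ≤ -n := by exact_mod_cast hone (-n) (by omega)
      have e0 := hpq n hn.ne 0 ⟨le_refl _, hC.le⟩
      have e1 := hpq n hn.ne C ⟨hC.le, le_refl _⟩
      have := aux_bound (-((n / b : ℝ) * C)) (C / b) (-((n / b : ℝ) * v)) hL0
        (by rw [show -((n / b : ℝ) * C) = (-n) * (C / b) by ring]; nlinarith)
        (by rw [show -((n / b : ℝ) * v) = (-n) * (v / b) by ring]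
            have := div_nonneg hv.1 hbR.le
            nlinarith)
        (by rw [show -((n / b : ℝ) * v) = (-n / b) * v by ring,
              show -((n / b : ℝ) * C) = (-n / b) * C by ring]
            exact mul_le_mul_of_nonneg_left hv.2 (div_nonneg (by linarith) hbR.le))
        (q n) (p n) (c n 0) (c n C) (by rw [e0]; simp [add_comm])
        (by rw [e1, neg_neg]; ring)
      rw [neg_neg] at this
      exact this.symm
    · have h0 : 0 ≤ (‖c n 0‖ + ‖c n C‖) / (1 - Real.exp (-(2 * (C / b)))) :=
        div_nonneg (by positivity) (by linarith)
      rw [(hz n hn).1, (hz n hn).2]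
      simpa using h0
    · have h1 : (1:ℝ) ≤ n := hone n hn
      have e0 := hpq n hn.ne' 0 ⟨le_refl _, hC.le⟩
      have e1 := hpq n hn.ne' C ⟨hC.le, le_refl _⟩
      exact aux_bound ((n / b : ℝ) * C) (C / b) ((n / b : ℝ) * v) hL0
        (by rw [show ((n / b : ℝ) * C) = (n) * (C / b) by ring]; nlinarith)
        (mul_nonneg (div_nonneg (by linarith) hbR.le) hv.1)
        (mul_le_mul_of_nonneg_left hv.2 (div_nonneg (by linarith) hbR.le))
        (p n) (q n) (c n 0) (c n C) (by rw [e0]; simp) e1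
  have hsb : Summable (fun n => (‖c n 0‖ + ‖c n C‖) / (1 - Real.exp (-(2 * (C / b))))) :=
    (hs0.norm.add hsC.norm).div_const _
  refine ⟨fun n => (p n).re + (q (-n)).re, fun n => -(p n).im + (q (-n)).im, ?_⟩
  intro u v S hv hS
  have hnexp : ∀ n : ℤ, ‖Complex.exp (Complex.I * n * u / b)‖ = 1 := by
    intro n
    rw [show (Complex.I * n * u / b) = ((n * u / b : ℝ) : ℂ) * Complex.I by push_cast; ring]
    exact Complex.norm_exp_ofReal_mul_I _
  set P : ℤ → ℂ := fun n => p n * (Real.exp ((n / b : ℝ) * v) : ℝ)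
    * Complex.exp (Complex.I * n * u / b) with hP
  set Q : ℤ → ℂ := fun n => q n * (Real.exp (-((n / b : ℝ) * v)) : ℝ)
    * Complex.exp (Complex.I * n * u / b) with hQ
  have hPs : Summable P := Summable.of_norm_bounded hsb (fun n => by
    rw [hP]; simp only [norm_mul _ (Complex.exp _), hnexp, mul_one]; exact (hbd n v hv).1)
  have hQs : Summable Q := Summable.of_norm_bounded hsb (fun n => by
    rw [hQ]; simp only [norm_mul _ (Complex.exp _), hnexp, mul_one]; exact (hbd n v hv).2)
  have h1 := hasSum_ite_sub_hasSum hS 0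
  have h2 : HasSum (fun n => P n + Q n) ((S:ℂ) - c 0 v) := by
    have ef : (fun n => if n = 0 then 0 else c n v * Complex.exp (Complex.I * n * u / b))
        = fun n => P n + Q n := by
      funext n
      by_cases hn : n = 0
      · subst hn; simp [hP, hQ, hp0, hq0]
      · rw [if_neg hn, hpq n hn v hv, hP, hQ]; ring
    have eg : (S:ℂ) - c 0 v * Complex.exp (Complex.I * (0:ℤ) * u / b) = (S:ℂ) - c 0 v := by simp
    rw [eg] at h1
    rw [← ef]
    exact h1
  have h3 : HasSum (fun n => P n + Q (-n)) ((S:ℂ) - c 0 v) := by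
    have e : (S:ℂ) - c 0 v = (∑' n, P n) + ∑' n, Q n :=
      h2.unique (hPs.hasSum.add hQs.hasSum)
    rw [e]
    exact hPs.hasSum.add ((Equiv.neg ℤ).hasSum_iff.2 hQs.hasSum)
  have h4 := Complex.hasSum_re h3
  have h5 : ∀ n : ℤ, (P n + Q (-n)).re =
      ((p n).re + (q (-n)).re) * Real.exp ((n : ℝ) * v / b) * Real.cos ((n : ℝ) * u / b)
      + (-(p n).im + (q (-n)).im) * Real.exp ((n : ℝ) * v / b) * Real.sin ((n : ℝ) * u / b) := by
    intro n
    have hE : ∀ m : ℤ, Complex.exp (Complex.I * m * u / b)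
        = (Real.cos (m * u / b) : ℝ) + (Real.sin (m * u / b) : ℝ) * Complex.I := by
      intro m
      rw [show (Complex.I * m * u / b) = ((m * u / b : ℝ) : ℂ) * Complex.I by push_cast; ring,
        Complex.exp_mul_I, Complex.ofReal_cos, Complex.ofReal_sin]
    have ea : -(((-n : ℤ) : ℝ) / b * v) = n * v / b := by push_cast; ring
    have eb : (n : ℝ) / b * v = n * v / b := by ring
    have ec : ((-n : ℤ) : ℝ) * u / b = -(n * u / b) := by push_cast; ring
    simp only [hP, hQ, hE, ea, eb, ec, Real.cos_neg, Real.sin_neg]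
    simp only [Complex.add_re, Complex.mul_re, Complex.ofReal_re, Complex.ofReal_im,
      Complex.mul_im, Complex.add_im, Complex.I_re, Complex.I_im]
    ring
  have h6 := (hasSum_subtype_iff_of_support_subset (s := {k : ℤ | k ≠ 0})
    (f := fun n => (P n + Q (-n)).re) (by
      intro n hn h0
      apply hn
      subst h0
      simp [hP, hQ, hp0, hq0])).2 h4
  have h7 : ((S:ℂ) - c 0 v).re = S - (c 0 v).re := by simp
  rw [h7] at h6
  have h8 : ((fun n => (P n + Q (-n)).re) ∘ (fun k : {k : ℤ // k ≠ 0} => k.1)) = _ :=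
    funext (fun k : {k : ℤ // k ≠ 0} => h5 k.1)
  rw [← h8]
  exact h6

lemma aux_pd (f : ℝ × ℝ → ℝ) (U : Set (ℝ × ℝ)) (hU : IsOpen U)
    (hf : ContDiffOn ℝ (⊤ : ℕ∞) f U) (w : ℝ × ℝ) :
    ContDiffOn ℝ (⊤ : ℕ∞) (fun p => fderiv ℝ f p w) U :=
  (hf.fderiv_of_isOpen hU (by norm_cast)).clm_apply contDiffOn_const

lemma aux_pu (f : ℝ × ℝ → ℝ) (U : Set (ℝ × ℝ)) (hU : IsOpen U)
    (hf : ContDiffOn ℝ (⊤ : ℕ∞) f U) (u v : ℝ) (h : (u, v) ∈ U) :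
    HasDerivAt (fun x => f (x, v)) (fderiv ℝ f (u, v) (1, 0)) u := by
  have h1 : HasFDerivAt f (fderiv ℝ f (u, v)) (u, v) :=
    ((hf.contDiffAt (hU.mem_nhds h)).differentiableAt (by simp)).hasFDerivAt
  exact h1.comp_hasDerivAt u ((hasDerivAt_id u).prodMk (hasDerivAt_const u v))

lemma aux_pv (f : ℝ × ℝ → ℝ) (U : Set (ℝ × ℝ)) (hU : IsOpen U)
    (hf : ContDiffOn ℝ (⊤ : ℕ∞) f U) (u v : ℝ) (h : (u, v) ∈ U) :
    HasDerivAt (fun y => f (u, y)) (fderiv ℝ f (u, v) (0, 1)) v := by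
  have h1 : HasFDerivAt f (fderiv ℝ f (u, v)) (u, v) :=
    ((hf.contDiffAt (hU.mem_nhds h)).differentiableAt (by simp)).hasFDerivAt
  exact h1.comp_hasDerivAt v ((hasDerivAt_const v u).prodMk (hasDerivAt_id v))


/-- A positive harmonic function on a neighborhood of the horizontal strip `0 ≤ v ≤ C`
which is `2πb`-periodic in `u` has the form
`Σ_{k≠0} (a_k e^{kv/b} cos(ku/b) + b_k e^{kv/b} sin(ku/b)) + a₀(1 - v/C) + b₀ v`
with `a₀ ≥ 0` and `b₀ ≥ 0`. -/
theorem periodic_harmonic_fourier_strip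
    (C : ℝ) (hC : 0 < C)
    (F : ℝ → ℝ → ℝ) (U : Set (ℝ × ℝ)) (hU : IsOpen U)
    (hUH : {p : ℝ × ℝ | 0 ≤ p.2 ∧ p.2 ≤ C} ⊆ U)
    (hsmooth : ContDiffOn ℝ (⊤ : ℕ∞) (fun p : ℝ × ℝ => F p.1 p.2) U)
    (hharm : ∀ p ∈ U,
      deriv (deriv (fun u => F u p.2)) p.1 + deriv (deriv (fun v => F p.1 v)) p.2 = 0)
    (hpos : ∀ u v : ℝ, 0 ≤ v → v ≤ C → 0 ≤ F u v)
    (b : ℕ) (hb : 0 < b)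
    (hper : ∀ u v : ℝ, 0 ≤ v → v ≤ C → F (u + 2 * π * b) v = F u v) :
    ∃ a c : ℤ → ℝ, 0 ≤ a 0 ∧ 0 ≤ c 0 ∧ ∀ u v : ℝ, 0 ≤ v → v ≤ C →
      F u v =
        (∑' k : {k : ℤ // k ≠ 0},
          (a k.1 * Real.exp ((k.1 : ℝ) * v / b) * Real.cos ((k.1 : ℝ) * u / b)
            + c k.1 * Real.exp ((k.1 : ℝ) * v / b) * Real.sin ((k.1 : ℝ) * u / b)))
        + a 0 * (1 - v / C) + c 0 * v := by
  have hbR : (0:ℝ) < b := by exact_mod_cast hb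
  have hT : (0:ℝ) < 2 * π * b := by positivity
  set f : ℝ × ℝ → ℝ := fun p => F p.1 p.2 with hf
  set Fu : ℝ × ℝ → ℝ := fun p => fderiv ℝ f p (1, 0) with hFu
  set Fv : ℝ × ℝ → ℝ := fun p => fderiv ℝ f p (0, 1) with hFv
  set Fuu : ℝ × ℝ → ℝ := fun p => fderiv ℝ Fu p (1, 0) with hFuu
  set Fvv : ℝ × ℝ → ℝ := fun p => fderiv ℝ Fv p (0, 1) with hFvv
  have sFu : ContDiffOn ℝ (⊤ : ℕ∞) Fu U := aux_pd f U hU hsmooth _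
  have sFv : ContDiffOn ℝ (⊤ : ℕ∞) Fv U := aux_pd f U hU hsmooth _
  have sFuu : ContDiffOn ℝ (⊤ : ℕ∞) Fuu U := aux_pd Fu U hU sFu _
  have sFvv : ContDiffOn ℝ (⊤ : ℕ∞) Fvv U := aux_pd Fv U hU sFv _
  have du : ∀ u v, (u, v) ∈ U → HasDerivAt (fun x => f (x, v)) (Fu (u, v)) u :=
    aux_pu f U hU hsmooth
  have duu : ∀ u v, (u, v) ∈ U → HasDerivAt (fun x => Fu (x, v)) (Fuu (u, v)) u :=
    aux_pu Fu U hU sFu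
  have dv : ∀ u v, (u, v) ∈ U → HasDerivAt (fun x => f (u, x)) (Fv (u, v)) v :=
    aux_pv f U hU hsmooth
  have dvv : ∀ u v, (u, v) ∈ U → HasDerivAt (fun x => Fv (u, x)) (Fvv (u, v)) v :=
    aux_pv Fv U hU sFv
  have hlap : ∀ u v, (u, v) ∈ U → Fvv (u, v) = -Fuu (u, v) := by
    intro u v h
    have h0 := hharm (u, v) h
    have n1 : ∀ᶠ x in nhds u, (x, v) ∈ U :=
      (Continuous.prodMk_left v).continuousAt.preimage_mem_nhds (hU.mem_nhds h)
    have n2 : ∀ᶠ y in nhds v, (u, y) ∈ U :=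
      (Continuous.prodMk_right u).continuousAt.preimage_mem_nhds (hU.mem_nhds h)
    have e1 : deriv (fun u => F u v) =ᶠ[nhds u] fun x => Fu (x, v) :=
      n1.mono fun x hx => (du x v hx).deriv
    have e2 : deriv (fun v => F u v) =ᶠ[nhds v] fun y => Fv (u, y) :=
      n2.mono fun y hy => (dv u y hy).deriv
    simp only at h0
    rw [e1.deriv_eq, e2.deriv_eq, (duu u v h).deriv, (dvv u v h).deriv] at h0
    linarith
  have hmem : ∀ u, ∀ v ∈ Set.Icc 0 C, (u, v) ∈ U := fun u v hv => hUH ⟨hv.1, hv.2⟩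
  -- continuity of the integrands
  have cint : ∀ (n : ℤ) (g : ℝ × ℝ → ℝ), ContDiffOn ℝ (⊤ : ℕ∞) g U →
      ContinuousOn (fun p : ℝ × ℝ => Complex.exp (-(Complex.I * n * p.1 / b)) * (g (p.1, p.2) : ℂ))
        {p | 0 ≤ p.2 ∧ p.2 ≤ C} := by
    intro n g hg
    have h1 : ContinuousOn g {p | 0 ≤ p.2 ∧ p.2 ≤ C} := hg.continuousOn.mono hUH
    have h2 : Continuous (fun p : ℝ × ℝ => Complex.exp (-(Complex.I * n * p.1 / b))) := by fun_prop
    exact h2.continuousOn.mul (Complex.continuous_ofReal.comp_continuousOn h1)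
  have slice : ∀ g : ℝ × ℝ → ℝ, ContDiffOn ℝ (⊤ : ℕ∞) g U → ∀ v ∈ Set.Icc 0 C,
      Continuous (fun u => ((g (u, v) : ℝ) : ℂ)) := by
    intro g hg v hv
    exact Complex.continuous_ofReal.comp
      (hg.continuousOn.comp_continuous (by fun_prop) (fun u => hmem u v hv))
  set G : ℤ → ℝ → ℂ := fun n v => ∫ u in (0:ℝ)..(2 * π * b),
    Complex.exp (-(Complex.I * n * u / b)) * (f (u, v) : ℂ) with hG
  have hibp : ∀ (n : ℤ), ∀ v ∈ Set.Icc 0 C,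
      ∫ u in (0:ℝ)..(2 * π * b), Complex.exp (-(Complex.I * n * u / b)) * (Fuu (u, v) : ℂ)
        = - ((n:ℂ) / b) ^ 2 * G n v := by
    intro n v hv
    exact aux_ibp b hb n (fun u => (f (u, v) : ℂ)) (fun u => (Fu (u, v) : ℂ))
      (fun u => (Fuu (u, v) : ℂ)) (fun u => (du u v (hmem u v hv)).ofReal_comp)
      (fun u => (duu u v (hmem u v hv)).ofReal_comp) (slice _ sFuu v hv)
      (fun u => by simp only [hf]; rw [hper u v hv.1 hv.2])
  have hsumG : ∀ v ∈ Set.Icc 0 C, Summable (fun n => G n v) := by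
    intro v hv
    exact aux_sum b hb (fun u => (f (u, v) : ℂ)) (fun u => (Fu (u, v) : ℂ))
      (fun u => (Fuu (u, v) : ℂ)) (fun u => (du u v (hmem u v hv)).ofReal_comp)
      (fun u => (duu u v (hmem u v hv)).ofReal_comp) (slice _ sFuu v hv)
      (fun u => by simp only [hf]; rw [hper u v hv.1 hv.2])
  have hGc : ∀ n, ContinuousOn (G n) (Set.Icc 0 C) := fun n =>
    aux_cont C _ hC (fun u v => Complex.exp (-(Complex.I * n * u / b)) * (f (u, v) : ℂ))
      (cint n f hsmooth)
  set G1 : ℤ → ℝ → ℂ := fun n v => ∫ u in (0:ℝ)..(2 * π * b),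
    Complex.exp (-(Complex.I * n * u / b)) * (Fv (u, v) : ℂ) with hG1
  have hd1 : ∀ n, ∀ v ∈ Set.Ioo 0 C, HasDerivAt (G n) (G1 n v) v := fun n =>
    aux_diff C _ hT.le (fun u v => Complex.exp (-(Complex.I * n * u / b)) * (f (u, v) : ℂ))
      (fun u v => Complex.exp (-(Complex.I * n * u / b)) * (Fv (u, v) : ℂ))
      (cint n f hsmooth) (cint n Fv sFv)
      (fun u v hv => ((dv u v (hmem u v ⟨hv.1.le, hv.2.le⟩)).ofReal_comp).const_mul _)
  have hd2 : ∀ n, ∀ v ∈ Set.Ioo 0 C,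
      HasDerivAt (G1 n) ((((n / b : ℝ)) : ℂ) ^ 2 * G n v) v := fun n v hv => by
    have h := aux_diff C _ hT.le
      (fun u v => Complex.exp (-(Complex.I * n * u / b)) * (Fv (u, v) : ℂ))
      (fun u v => Complex.exp (-(Complex.I * n * u / b)) * (Fvv (u, v) : ℂ))
      (cint n Fv sFv) (cint n Fvv sFvv)
      (fun u v hv => ((dvv u v (hmem u v ⟨hv.1.le, hv.2.le⟩)).ofReal_comp).const_mul _) v hv
    refine h.congr_deriv ?_
    have hv' : v ∈ Set.Icc 0 C := ⟨hv.1.le, hv.2.le⟩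
    have e : ∀ u : ℝ, Complex.exp (-(Complex.I * n * u / b)) * (Fvv (u, v) : ℂ)
        = -(Complex.exp (-(Complex.I * n * u / b)) * (Fuu (u, v) : ℂ)) := fun u => by
      rw [hlap u v (hmem u v hv')]; push_cast; ring
    simp only [e]
    rw [intervalIntegral.integral_neg, hibp n v hv']
    push_cast; ring
  set c : ℤ → ℝ → ℂ := fun n v => (1 / (2 * π * b) : ℝ) * G n v with hc
  have hsumc : ∀ v ∈ Set.Icc 0 C, Summable (fun n => c n v) := fun v hv =>
    (hsumG v hv).mul_left _
  have m0 : (0:ℝ) ∈ Set.Icc 0 C := ⟨le_refl _, hC.le⟩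
  have mC : C ∈ Set.Icc 0 C := ⟨hC.le, le_refl _⟩
  obtain ⟨A, B, hAB⟩ := aux_final b hb C hC c (by
    intro n hn
    have hn0 : (n:ℝ) ≠ 0 := by exact_mod_cast hn
    obtain ⟨p, q, h⟩ := aux_ode C hC (n / b) (div_ne_zero hn0 hbR.ne') (G n) (G1 n) (hGc n)
      (hd1 n) (hd2 n)
    refine ⟨(1 / (2 * π * b) : ℝ) * p, (1 / (2 * π * b) : ℝ) * q, fun v hv => ?_⟩
    simp only [hc]
    rw [h v hv]; ring) (hsumc 0 m0) (hsumc C mC)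
  obtain ⟨p, q, hpq⟩ := aux_ode0 C hC (G 0) (G1 0) (hGc 0) (hd1 0) (fun v hv => by
    simpa using hd2 0 v hv)
  have hlin : ∀ v ∈ Set.Icc 0 C, (c 0 v).re = (1 / (2 * π * b)) * (p.re + q.re * v) := by
    intro v hv
    simp only [hc]
    rw [hpq v hv, Complex.re_ofReal_mul]
    simp
  have hnn : ∀ v ∈ Set.Icc 0 C, 0 ≤ (c 0 v).re := by
    intro v hv
    simp only [hc]
    rw [Complex.re_ofReal_mul]
    refine mul_nonneg (by positivity) ?_
    have : G 0 v = ((∫ u in (0:ℝ)..(2 * π * b), f (u, v) : ℝ) : ℂ) := by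
      rw [← intervalIntegral.integral_ofReal]
      simp [hG]
    rw [this, Complex.ofReal_re]
    exact intervalIntegral.integral_nonneg hT.le (fun u _ => hpos u v hv.1 hv.2)
  refine ⟨fun n => if n = 0 then (c 0 0).re else A n, fun n => if n = 0 then (c 0 C).re / C else B n,
    ?_, ?_, ?_⟩
  · simpa using hnn 0 m0
  · simpa using div_nonneg (hnn C mC) hC.le
  · intro u v h0 h1
    have hv : v ∈ Set.Icc 0 C := ⟨h0, h1⟩
    have hF := aux_fourier b hb (fun u => (f (u, v) : ℂ)) (slice f hsmooth v hv)
      (fun u => by simp only [hf]; rw [hper u v hv.1 hv.2]) (fun n => c n v) (fun n => rfl)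
      (hsumc v hv) u
    have hS := (hAB u v _ hv hF).tsum_eq
    have hcg : (∑' k : {k : ℤ // k ≠ 0},
          ((if k.1 = 0 then (c 0 0).re else A k.1) * Real.exp ((k.1 : ℝ) * v / b)
              * Real.cos ((k.1 : ℝ) * u / b)
            + (if k.1 = 0 then (c 0 C).re / C else B k.1) * Real.exp ((k.1 : ℝ) * v / b)
              * Real.sin ((k.1 : ℝ) * u / b))) = f (u, v) - (c 0 v).re := by
      rw [← hS]
      refine tsum_congr (fun k => ?_)
      rw [if_neg k.2, if_neg k.2]
    simp only [if_true]
    rw [hcg, hlin v hv, hlin 0 m0, hlin C mC]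
    simp only [hf]
    field_simp
    ring
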